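/- arXiv:math-ph/0010019 — 2 statements merged into one kernel-verified Lean document; each statement's English description precedes it below -/
import Mathlib

section
/- Fix an integer d ≥ 1, m > 0 and points x, y ∈ ℝ^d with x ≠ y. Then lim_{a→0⁺} a² Σ_{N=1}^∞ (2π a² N)^{−d/2} exp(−|x−y|²/(2a²N) − m²a²N/2) = ∫_0^∞ (2πT)^{−d/2} exp(−|x−y|²/(2T) − m²T/2) dT. (Convergence of the piecewise-linear discrete propagator H^a(x,y) to the Euclidean propagator G(x,y).) -/
open MeasureTheory Filter Topology Real Set

/-- The integral over `(0, ∞)` of a step function with step `h` is `h` times the sum of its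
values. -/
theorem integral_Ioi_comp_natFloor_div {E : Type*} [NormedAddCommGroup E] [NormedSpace ℝ E]
    [CompleteSpace E] {g : ℕ → E} {h : ℝ} (hh : 0 < h)
    (hg : IntegrableOn (fun t : ℝ => g ⌊t / h⌋₊) (Ioi 0)) :
    ∫ t in Ioi (0 : ℝ), g ⌊t / h⌋₊ = h • ∑' N, g N := by
  have mem_iff (N : ℕ) (t : ℝ) : t ∈ Ico (h * N) (h * (N + 1)) ↔ 0 ≤ t ∧ ⌊t / h⌋₊ = N := by
    constructor
    · rintro ⟨h₁, h₂⟩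
      have ht : 0 ≤ t := le_trans (by positivity) h₁
      refine ⟨ht, (Nat.floor_eq_iff (by positivity)).2 ⟨?_, ?_⟩⟩
      · rwa [le_div_iff₀' hh]
      · rwa [div_lt_iff₀' hh]
    · rintro ⟨ht, hN⟩
      obtain ⟨h₁, h₂⟩ := (Nat.floor_eq_iff (by positivity)).1 hN
      exact ⟨(le_div_iff₀' hh).1 h₁, (div_lt_iff₀' hh).1 h₂⟩
  have iUnion_eq : ⋃ N : ℕ, Ico (h * N) (h * (N + 1)) = Ici (0 : ℝ) := by
    ext t
    simp only [mem_iUnion, mem_iff, mem_Ici, exists_and_left, exists_eq', and_true]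
  have disj : Pairwise (Function.onFun Disjoint fun N : ℕ => Ico (h * N) (h * (N + 1))) := by
    intro M N hMN
    refine Set.disjoint_left.2 fun t hM hN => hMN ?_
    rw [← ((mem_iff M t).1 hM).2, ← ((mem_iff N t).1 hN).2]
  have sum := hasSum_integral_iUnion (μ := volume) (f := fun t : ℝ => g ⌊t / h⌋₊)
    (fun N : ℕ => (measurableSet_Ico : MeasurableSet (Ico (h * N) (h * (N + 1))))) disj
    (by rw [iUnion_eq]; rwa [integrableOn_Ici_iff_integrableOn_Ioi])
  have piece (N : ℕ) : ∫ t in Ico (h * N) (h * (N + 1)), g ⌊t / h⌋₊ = h • g N := by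
    rw [setIntegral_congr_fun (g := fun _ => g N) measurableSet_Ico
      fun t ht => by simp only [((mem_iff N t).1 ht).2]]
    rw [setIntegral_const, Measure.real, Real.volume_Ico, ENNReal.toReal_ofReal (by nlinarith)]
    congr 1
    ring
  simp only [piece, iUnion_eq, integral_Ici_eq_integral_Ioi] at sum
  rw [← sum.tsum_eq, tsum_const_smul'' h]

/-- Right Riemann sums of a continuous function on `(0, ∞)` dominated by an integrable antitone
function converge to its integral as the step tends to `0`. -/
theorem tendsto_riemannSum_Ioi {E : Type*} [NormedAddCommGroup E] [NormedSpace ℝ E]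
    [CompleteSpace E] {f : ℝ → E} {B : ℝ → ℝ} (hf : ContinuousOn f (Ioi 0))
    (hfB : ∀ t, 0 < t → ‖f t‖ ≤ B t) (hB : AntitoneOn B (Ioi 0)) (hBi : IntegrableOn B (Ioi 0)) :
    Tendsto (fun h : ℝ => h • ∑' N : ℕ, f (h * (N + 1))) (𝓝[>] 0) (𝓝 (∫ t in Ioi 0, f t)) := by
  have meas (h : ℝ) : AEStronglyMeasurable (fun t : ℝ => f (h * ((⌊t / h⌋₊ : ℝ) + 1)))
      (volume.restrict (Ioi 0)) :=
    ((StronglyMeasurable.of_discrete (f := fun N : ℕ => f (h * (N + 1)))).comp_measurable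
      (Nat.measurable_floor.comp (measurable_id.div_const h))).aestronglyMeasurable
  have lt {h : ℝ} (hh : 0 < h) (t : ℝ) : t < h * ((⌊t / h⌋₊ : ℝ) + 1) :=
    (div_lt_iff₀' hh).1 (Nat.lt_floor_add_one _)
  have bound {h : ℝ} (hh : 0 < h) :
      ∀ᵐ t ∂volume.restrict (Ioi 0), ‖f (h * ((⌊t / h⌋₊ : ℝ) + 1))‖ ≤ B t := by
    refine (ae_restrict_iff' measurableSet_Ioi).2 (ae_of_all _ fun t (ht : 0 < t) => ?_)
    have hpos := ht.trans (lt hh t)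
    exact (hfB _ hpos).trans (hB ht hpos (lt hh t).le)
  have key : Tendsto (fun h : ℝ => ∫ t in Ioi (0 : ℝ), f (h * ((⌊t / h⌋₊ : ℝ) + 1))) (𝓝[>] 0)
      (𝓝 (∫ t in Ioi 0, f t)) := by
    refine tendsto_integral_filter_of_dominated_convergence B (Eventually.of_forall meas)
      (eventually_mem_nhdsWithin.mono fun h hh => bound hh) hBi
      ((ae_restrict_iff' measurableSet_Ioi).2 (ae_of_all _ fun t (ht : 0 < t) => ?_))
    refine (hf.continuousAt (Ioi_mem_nhds ht)).tendsto.comp ?_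
    have upper : Tendsto (fun h : ℝ => t + h) (𝓝[>] 0) (𝓝 t) := by
      refine tendsto_nhdsWithin_of_tendsto_nhds ?_
      simpa using (continuous_const_add t).tendsto 0
    refine tendsto_of_tendsto_of_tendsto_of_le_of_le' tendsto_const_nhds upper
      (eventually_mem_nhdsWithin.mono fun h hh => (lt hh t).le)
      (eventually_mem_nhdsWithin.mono fun h (hh : 0 < h) => ?_)
    have := (le_div_iff₀' hh).1 (Nat.floor_le (div_pos ht hh).le)
    linarith
  refine key.congr' (eventually_mem_nhdsWithin.mono fun h (hh : 0 < h) => ?_)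
  exact integral_Ioi_comp_natFloor_div (g := fun N : ℕ => f (h * (N + 1))) hh
    (hBi.mono' (meas h) (bound hh))

/-- The heat kernel factor is bounded uniformly in time away from the diagonal. -/
theorem rpow_neg_mul_exp_neg_div_le {s c t : ℝ} (hs : 0 < s) (hc : 0 < c) (ht : 0 < t) :
    (2 * π * t) ^ (-s) * exp (-c / (2 * t)) ≤ (π * c / s) ^ (-s) := by
  have le_exp : (c / (2 * t) / s) ^ s ≤ exp (c / (2 * t)) := by
    calc (c / (2 * t) / s) ^ s ≤ exp (c / (2 * t) / s) ^ s := by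
          gcongr
          linarith [add_one_le_exp (c / (2 * t) / s)]
      _ = exp (c / (2 * t)) := by
          rw [← exp_mul, div_mul_cancel₀ _ hs.ne']
  calc (2 * π * t) ^ (-s) * exp (-c / (2 * t))
      = (2 * π * t) ^ (-s) * (exp (c / (2 * t)))⁻¹ := by rw [← exp_neg, neg_div]
    _ ≤ (2 * π * t) ^ (-s) * ((c / (2 * t) / s) ^ s)⁻¹ := by gcongr
    _ = (π * c / s) ^ (-s) := by
      rw [← rpow_neg (by positivity), ← mul_rpow (by positivity) (by positivity)]
      congr 1
      field_simp

/-- **Convergence of the piecewise-linear discrete propagator to the Euclidean propagator.**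
For `d ≥ 1`, `m > 0` and `x ≠ y` in `ℝ^d`,
`H^a(x,y) = a² Σ_{N=1}^∞ (2π a² N)^{−d/2} exp(−|x−y|²/(2a²N) − m²a²N/2)`
converges, as `a → 0⁺`, to
`G(x,y) = ∫_0^∞ (2πT)^{−d/2} exp(−|x−y|²/(2T) − m²T/2) dT`. -/
theorem discrete_propagator_tendsto_continuum
    (d : ℕ) (hd : 1 ≤ d) (m : ℝ) (hm : 0 < m)
    (x y : EuclideanSpace ℝ (Fin d)) (hxy : x ≠ y) :
    Tendsto
      (fun a : ℝ => a ^ 2 * ∑' N : ℕ,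
        (2 * π * a ^ 2 * ((N : ℝ) + 1)) ^ (-(d : ℝ) / 2) *
          Real.exp (-‖x - y‖ ^ 2 / (2 * a ^ 2 * ((N : ℝ) + 1))
            - m ^ 2 * a ^ 2 * ((N : ℝ) + 1) / 2))
      (nhdsWithin 0 (Set.Ioi 0))
      (nhds (∫ T in Set.Ioi (0 : ℝ),
        (2 * π * T) ^ (-(d : ℝ) / 2) *
          Real.exp (-‖x - y‖ ^ 2 / (2 * T) - m ^ 2 * T / 2))) := by
  have hs : (0 : ℝ) < d / 2 := by positivity
  have hc : 0 < ‖x - y‖ ^ 2 := by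
    have := norm_pos_iff.2 (sub_ne_zero.2 hxy)
    positivity
  set c := ‖x - y‖ ^ 2
  have cont : ContinuousOn (fun T : ℝ => (2 * π * T) ^ (-(d : ℝ) / 2) *
      Real.exp (-c / (2 * T) - m ^ 2 * T / 2)) (Ioi 0) := by
    intro T (hT : 0 < T)
    refine ContinuousAt.continuousWithinAt (ContinuousAt.mul ?_ ?_)
    · exact (by fun_prop : ContinuousAt (fun T : ℝ => 2 * π * T) T).rpow_const
        (Or.inl (by positivity))
    · have : 2 * T ≠ 0 := by positivity
      fun_prop (disch := assumption)
  have riemann := tendsto_riemannSum_Ioi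
    (B := fun T => (π * c / (d / 2)) ^ (-((d : ℝ) / 2)) * exp (-(m ^ 2 / 2) * T)) cont
    (fun T hT => by
      rw [Real.norm_of_nonneg (by positivity), sub_eq_add_neg, exp_add, ← mul_assoc, neg_div]
      have := rpow_neg_mul_exp_neg_div_le hs hc hT
      rw [show -(m ^ 2 * T / 2) = -(m ^ 2 / 2) * T by ring]
      gcongr)
    (fun S _ T _ hST => mul_le_mul_of_nonneg_left
      (exp_le_exp.2 (mul_le_mul_of_nonpos_left hST (by linarith [sq_nonneg m]))) (by positivity))
    ((integrableOn_exp_mul_Ioi (neg_lt_zero.2 (by positivity)) 0).const_mul _)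
  have sq_tendsto : Tendsto (fun a : ℝ => a ^ 2) (𝓝[>] 0) (𝓝[>] 0) := by
    refine tendsto_nhdsWithin_iff.2 ⟨tendsto_nhdsWithin_of_tendsto_nhds ?_,
      eventually_mem_nhdsWithin.mono fun a (ha : 0 < a) => pow_pos ha 2⟩
    simpa using (continuous_pow 2).tendsto (0 : ℝ)
  simpa only [Function.comp_def, smul_eq_mul, ← mul_assoc] using riemann.comp sq_tendsto
end

section
/- (Theorem 3.1) Fix an integer d ≥ 1, m > 0 and x ∈ ℝ^d. Then the probability measures W_{x,a} on Γ̃(x) converge weakly, as a → 0⁺, to (m²/2)·W_x. -/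
open MeasureTheory Filter Topology Real Set
open scoped RealInnerProductSpace ENNReal unitInterval

noncomputable section

/-- `ℝ^d` as a Euclidean space. -/
abbrev Ed (d : ℕ) := EuclideanSpace ℝ (Fin d)

/-- The space of continuous paths `[0,1] → ℝ^d`, with the uniform metric. -/
abbrev PathSp (d : ℕ) := C(unitInterval, Ed d)

instance (d : ℕ) : MeasurableSpace (PathSp d) := borel _
instance (d : ℕ) : BorelSpace (PathSp d) := ⟨rfl⟩

/-- Evaluation of a path at a real time, clamped to `[0,1]`. -/
def evalAt {d : ℕ} (ω : PathSp d) (t : ℝ) : Ed d := ω (Set.projIcc 0 1 zero_le_one t)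

/-- `Ω(x)`: continuous paths starting at `x`. -/
abbrev Omega1 {d : ℕ} (x : Ed d) := {ω : PathSp d // ω 0 = x}

/-- `Ω(x,y)`: continuous paths from `x` to `y`. -/
abbrev Omega2 {d : ℕ} (x y : Ed d) := {ω : PathSp d // ω 0 = x ∧ ω 1 = y}

/-- clamp a real number to `[0,1]`. -/
def clamp01 (r : ℝ) : ℝ := min 1 (max 0 r)

lemma clamp01_of_nonpos {r : ℝ} (h : r ≤ 0) : clamp01 r = 0 := by
  rw [clamp01, max_eq_left h, min_eq_right zero_le_one]

lemma clamp01_of_one_le {r : ℝ} (h : 1 ≤ r) : clamp01 r = 1 := by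
  rw [clamp01, max_eq_right (zero_le_one.trans h), min_eq_left h]

lemma clamp01_continuous : Continuous clamp01 :=
  continuous_const.min (continuous_const.max continuous_id)

/-- The piecewise linear path starting at `x` with `N` steps given by the increments `v i`,
the `i`-th step being linearly parametrized by `[i/N, (i+1)/N]`. -/
def pwLinE {d : ℕ} (x : Ed d) (N : ℕ) (v : Fin N → Ed d) : PathSp d :=
  ⟨fun t => x + ∑ i : Fin N, clamp01 ((N : ℝ) * (t : ℝ) - ((i : ℕ) : ℝ)) • v i, by
    refine continuous_const.add (continuous_finset_sum _ fun i _ => ?_)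
    exact ((clamp01_continuous.comp
      ((continuous_const.mul continuous_subtype_val).sub continuous_const)).smul
      continuous_const)⟩

lemma pwLinE_zero {d : ℕ} (x : Ed d) (N : ℕ) (v : Fin N → Ed d) :
    pwLinE x N v 0 = x := by
  show x + ∑ i : Fin N, clamp01 ((N : ℝ) * ((0 : unitInterval) : ℝ) - ((i : ℕ) : ℝ)) • v i = x
  have h : ∀ i : Fin N, clamp01 ((N : ℝ) * ((0 : unitInterval) : ℝ) - ((i : ℕ) : ℝ)) = 0 := by
    intro i
    apply clamp01_of_nonpos
    have h0 : ((0 : unitInterval) : ℝ) = 0 := rfl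
    rw [h0, mul_zero, zero_sub]
    exact neg_nonpos.mpr (Nat.cast_nonneg (i : ℕ))
  simp only [h, zero_smul, Finset.sum_const_zero, add_zero]

lemma pwLinE_one {d : ℕ} (x : Ed d) (N : ℕ) (v : Fin N → Ed d) :
    pwLinE x N v 1 = x + ∑ i : Fin N, v i := by
  show x + ∑ i : Fin N, clamp01 ((N : ℝ) * ((1 : unitInterval) : ℝ) - ((i : ℕ) : ℝ)) • v i
      = x + ∑ i : Fin N, v i
  have h : ∀ i : Fin N, clamp01 ((N : ℝ) * ((1 : unitInterval) : ℝ) - ((i : ℕ) : ℝ)) = 1 := by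
    intro i
    apply clamp01_of_one_le
    have h1 : ((1 : unitInterval) : ℝ) = 1 := rfl
    have h2 : ((i : ℕ) : ℝ) + 1 ≤ (N : ℝ) := by
      exact_mod_cast Nat.succ_le_of_lt i.isLt
    rw [h1, mul_one]; linarith
  simp only [h, one_smul]

/-- Piecewise linear element of `Ω(x)` with increments `v`. -/
def pwLin1 {d : ℕ} (x : Ed d) (N : ℕ) (v : Fin N → Ed d) : Omega1 x :=
  ⟨pwLinE x N v, pwLinE_zero x N v⟩

/-- Piecewise linear element of `Ω(x,y)` with increments `v` summing to `y - x`. -/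
def pwLin2 {d : ℕ} (x y : Ed d) (N : ℕ) (v : Fin N → Ed d)
    (h : x + ∑ i : Fin N, v i = y) : Omega2 x y :=
  ⟨pwLinE x N v, pwLinE_zero x N v, by rw [pwLinE_one, h]⟩

/-- the point preceding `x_i` in the list `x, x_1, …, x_N`. -/
def prevPt {d : ℕ} (x : Ed d) {N : ℕ} (xs : Fin N → Ed d) (i : Fin N) : Ed d :=
  if (i : ℕ) = 0 then x else xs ⟨(i : ℕ) - 1, lt_of_le_of_lt (Nat.pred_le _) i.isLt⟩

/-- The discrete measure `W_{x,a,N}`, i.e. the measure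
`∏_{i=1}^N (2πa²)^{-d/2} exp(-|x_i - x_{i-1}|²/(2a²)) dx_1 … dx_N` (with `x_0 = x`)
on `N`-step piecewise linear paths, placed on `{a²N} × Ω(x) ⊆ ℝ × Ω(x)`.
For `N = 0` this is the Dirac measure at `(0, constant path at x)`. -/
def WxaN {d : ℕ} (x : Ed d) (a : ℝ) (N : ℕ) : Measure (ℝ × Omega1 x) :=
  Measure.map
    (fun xs : Fin N → Ed d =>
      ((a ^ 2 * N : ℝ), pwLin1 x N fun i => xs i - prevPt x xs i))
    (volume.withDensity fun xs : Fin N → Ed d =>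
      ENNReal.ofReal (∏ i : Fin N,
        (2 * π * a ^ 2) ^ (-(d : ℝ) / 2) *
          Real.exp (-‖xs i - prevPt x xs i‖ ^ 2 / (2 * a ^ 2))))

/-- The approximating probability measure
`W_{x,a} = (1 - e^{-m²a²/2}) Σ_{N=0}^∞ e^{-m²a²N/2} W_{x,a,N}`. -/
def Wxa {d : ℕ} (x : Ed d) (m a : ℝ) : Measure (ℝ × Omega1 x) :=
  ENNReal.ofReal (1 - Real.exp (-m ^ 2 * a ^ 2 / 2)) •
    Measure.sum fun N : ℕ =>
      ENNReal.ofReal (Real.exp (-m ^ 2 * a ^ 2 * N / 2)) • WxaN x a N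

/-- The lattice step of length `a` in direction `p.1`, forwards or backwards
according to `p.2`. -/
def stepVec {d : ℕ} (a : ℝ) (p : Fin d × Bool) : Ed d :=
  (if p.2 then a else -a) • EuclideanSpace.single p.1 (1 : ℝ)

/-- The normalized counting measure `V'_{x,a,N}` giving mass `(2d)^{-N}` to each
(piecewise linearly parametrized) `N`-step nearest-neighbour lattice path in `x + aℤ^d`
starting at `x`.  For `N = 0` it is the Dirac measure at the constant path. -/
def VxaN {d : ℕ} (x : Ed d) (a : ℝ) (N : ℕ) : Measure (Omega1 x) :=
  Measure.sum fun s : Fin N → Fin d × Bool =>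
    (((2 * d : ℕ) : ℝ≥0∞) ^ N)⁻¹ •
      Measure.dirac (pwLin1 x N fun i => stepVec a (s i))

/-- The approximating probability measure
`V'_{x,a} = (1 - e^{-m²a²/(2d)}) Σ_{N=0}^∞ e^{-m²a²N/(2d)} V'_{x,a,N}`. -/
def Vxa {d : ℕ} (x : Ed d) (m a : ℝ) : Measure (Omega1 x) :=
  ENNReal.ofReal (1 - Real.exp (-m ^ 2 * a ^ 2 / (2 * d))) •
    Measure.sum fun N : ℕ =>
      ENNReal.ofReal (Real.exp (-m ^ 2 * a ^ 2 * N / (2 * d))) • VxaN x a N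

/-- `Wt` is the family of Wiener measures `(W_x^t)_{t>0}` on `Ω(x)`:
each `W_x^t` is a Borel probability measure, characterized by the characteristic
functions of its finite dimensional distributions
`∫ exp(i Σ_j ξ_j·ω(t_j)) dW_x^t = exp(-(t/2) Σ_j (t_j - t_{j-1}) |ξ_j + ⋯ + ξ_n|²
+ i x·(ξ_1 + ⋯ + ξ_n))` for all `0 = t_0 < t_1 < ⋯ < t_n ≤ 1`. -/
def IsWienerFamily {d : ℕ} (x : Ed d) (Wt : ℝ → Measure (Omega1 x)) : Prop :=
  ∀ t : ℝ, 0 < t → (IsProbabilityMeasure (Wt t) ∧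
    ∀ (n : ℕ) (ts : ℕ → ℝ), ts 0 = 0 → (∀ i < n, ts i < ts (i + 1)) → ts n ≤ 1 →
      ∀ ξ : Fin n → Ed d,
        (∫ ω : Omega1 x, Complex.exp (Complex.I *
            ((∑ i : Fin n, ⟪ξ i, evalAt ω.1 (ts ((i : ℕ) + 1))⟫ : ℝ) : ℂ)) ∂(Wt t))
          = Complex.exp
              (((-(t / 2) * ∑ i : Fin n,
                  (ts ((i : ℕ) + 1) - ts (i : ℕ)) * ‖∑ j ∈ Finset.Ici i, ξ j‖ ^ 2 : ℝ) : ℂ)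
                + Complex.I * ((⟪∑ j, ξ j, x⟫ : ℝ) : ℂ)))

/-- Density of the centred Gaussian measure on `ℝ^d` with covariance `a² · 1`. -/
def gaussDensity {d : ℕ} (a : ℝ) (v : Ed d) : ℝ :=
  (2 * π * a ^ 2) ^ (-(d : ℝ) / 2) * Real.exp (-‖v‖ ^ 2 / (2 * a ^ 2))

/-- The law of `N` independent centred Gaussian vectors in `ℝ^d` with covariance `a² · 1`. -/
def gaussSteps (d N : ℕ) (a : ℝ) : Measure (Fin N → Ed d) :=
  volume.withDensity fun v => ENNReal.ofReal (∏ i, gaussDensity a (v i))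

lemma gaussDensity_nonneg {d : ℕ} (a : ℝ) (v : Ed d) : 0 ≤ gaussDensity a v := by
  unfold gaussDensity; positivity

lemma continuous_gaussDensity {d : ℕ} (a : ℝ) : Continuous (gaussDensity (d := d) a) := by
  unfold gaussDensity; fun_prop

lemma continuous_prod_gaussDensity {d N : ℕ} (a : ℝ) :
    Continuous fun v : Fin N → Ed d => ∏ i, gaussDensity a (v i) :=
  continuous_finsetProd _ fun i _ => (continuous_gaussDensity a).comp (continuous_apply i)

lemma integral_gaussDensity_mul_cexp {d : ℕ} {a : ℝ} (ha : 0 < a) (η : Ed d) :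
    ∫ v : Ed d, (gaussDensity a v : ℂ) * Complex.exp (Complex.I * (⟪η, v⟫ : ℝ)) =
      Complex.exp ((-(a ^ 2 / 2) * ‖η‖ ^ 2 : ℝ) : ℂ) := by
  have hb : 0 < (((1 / (2 * a ^ 2) : ℝ)) : ℂ).re := by
    rw [Complex.ofReal_re]; positivity
  have key := GaussianFourier.integral_cexp_neg_mul_sq_norm_add (V := Ed d) hb Complex.I η
  have h1 : ∀ v : Ed d, (gaussDensity a v : ℂ) * Complex.exp (Complex.I * (⟪η, v⟫ : ℝ)) =
      (((2 * π * a ^ 2) ^ (-(d : ℝ) / 2) : ℝ) : ℂ) *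
        Complex.exp (-((1 / (2 * a ^ 2) : ℝ) : ℂ) * ‖v‖ ^ 2 + Complex.I * (⟪η, v⟫ : ℝ)) := by
    intro v
    rw [gaussDensity, Complex.exp_add, Complex.ofReal_mul, Complex.ofReal_exp, mul_assoc]
    congr 3
    push_cast
    ring
  simp_rw [h1]
  rw [integral_const_mul, key, ← mul_assoc]
  have h2 : ((π : ℂ) / ((1 / (2 * a ^ 2) : ℝ) : ℂ)) ^ ((Module.finrank ℝ (Ed d) : ℂ) / 2) =
      (((2 * π * a ^ 2) ^ ((d : ℝ) / 2) : ℝ) : ℂ) := by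
    rw [Complex.ofReal_cpow (by positivity), finrank_euclideanSpace_fin]
    push_cast
    congr 1
    field_simp
  rw [h2, ← Complex.ofReal_mul, ← Real.rpow_add (by positivity)]
  have h3 : -(d : ℝ) / 2 + (d : ℝ) / 2 = 0 := by ring
  rw [h3, Real.rpow_zero, Complex.ofReal_one, one_mul]
  congr 1
  have : (a : ℂ) ≠ 0 := by exact_mod_cast ha.ne'
  push_cast
  rw [Complex.I_sq]
  field_simp
  ring

lemma integral_gaussSteps {d N : ℕ} (a : ℝ) (g : (Fin N → Ed d) → ℂ) :
    ∫ v, g v ∂(gaussSteps d N a) = ∫ v, ((∏ i, gaussDensity a (v i) : ℝ) : ℂ) * g v := by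
  rw [gaussSteps, integral_withDensity_eq_integral_toReal_smul₀]
  · refine integral_congr_ae (ae_of_all _ fun v => ?_)
    simp only
    rw [ENNReal.toReal_ofReal (Finset.prod_nonneg fun i _ => gaussDensity_nonneg a _),
      Complex.real_smul]
  · exact (continuous_prod_gaussDensity a).measurable.ennreal_ofReal.aemeasurable
  · exact ae_of_all _ fun _ => ENNReal.ofReal_lt_top

lemma integral_cexp_gaussSteps {d N : ℕ} {a : ℝ} (ha : 0 < a) (η : Fin N → Ed d) :
    ∫ v, Complex.exp (Complex.I * ((∑ i, ⟪η i, v i⟫ : ℝ) : ℂ)) ∂(gaussSteps d N a) =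
      Complex.exp ((-(a ^ 2 / 2) * ∑ i, ‖η i‖ ^ 2 : ℝ) : ℂ) := by
  rw [integral_gaussSteps]
  have h : ∀ v : Fin N → Ed d, ((∏ i, gaussDensity a (v i) : ℝ) : ℂ) *
      Complex.exp (Complex.I * ((∑ i, ⟪η i, v i⟫ : ℝ) : ℂ)) =
      ∏ i, ((gaussDensity a (v i) : ℂ) * Complex.exp (Complex.I * (⟪η i, v i⟫ : ℝ))) := by
    intro v
    rw [Finset.prod_mul_distrib, ← Complex.exp_sum, Complex.ofReal_sum, Finset.mul_sum,
      Complex.ofReal_prod]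
  simp_rw [h]
  rw [integral_fintype_prod_volume_eq_prod
    (f := fun i (v : Ed d) => (gaussDensity a v : ℂ) * Complex.exp (Complex.I * (⟪η i, v⟫ : ℝ)))]
  simp_rw [integral_gaussDensity_mul_cexp ha]
  rw [← Complex.exp_sum, ← Complex.ofReal_sum, ← Finset.mul_sum]

lemma isProbabilityMeasure_gaussSteps (d N : ℕ) {a : ℝ} (ha : 0 < a) :
    IsProbabilityMeasure (gaussSteps d N a) := by
  have h := integral_cexp_gaussSteps (N := N) ha (fun _ => (0 : Ed d))
  simp only [inner_zero_left, Finset.sum_const_zero, Complex.ofReal_zero, mul_zero,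
    Complex.exp_zero, norm_zero, ne_eq, OfNat.ofNat_ne_zero, not_false_eq_true, zero_pow] at h
  rw [integral_gaussSteps] at h
  simp only [mul_one] at h
  rw [integral_complex_ofReal] at h
  have h1 : ∫ v : Fin N → Ed d, ∏ i, gaussDensity a (v i) = 1 := by exact_mod_cast h
  refine ⟨?_⟩
  rw [gaussSteps, withDensity_apply _ MeasurableSet.univ, Measure.restrict_univ,
    ← ofReal_integral_eq_lintegral_ofReal (integrable_of_integral_eq_one h1)
      (ae_of_all _ fun v => Finset.prod_nonneg fun i _ => gaussDensity_nonneg a _),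
    h1, ENNReal.ofReal_one]

/-- Finite measures on `(ℝ^d)^N` are determined by their characteristic functions. -/
lemma ext_of_integral_cexp_sum_inner {d N : ℕ} {μ ν : Measure (Fin N → Ed d)}
    [IsFiniteMeasure μ] [IsFiniteMeasure ν]
    (h : ∀ η : Fin N → Ed d,
      ∫ v, Complex.exp (Complex.I * ((∑ i, ⟪η i, v i⟫ : ℝ) : ℂ)) ∂μ =
        ∫ v, Complex.exp (Complex.I * ((∑ i, ⟪η i, v i⟫ : ℝ) : ℂ)) ∂ν) : μ = ν := by
  refine Measure.ext_of_charFunDual (funext fun L => ?_)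
  rw [charFunDual_apply, charFunDual_apply]
  have hL : ∀ v : Fin N → Ed d, L v = ∑ i, ⟪(InnerProductSpace.toDual ℝ (Ed d)).symm
      (L.comp (ContinuousLinearMap.single ℝ (fun _ : Fin N => Ed d) i)), v i⟫ := by
    intro v
    simp only [InnerProductSpace.toDual_symm_apply, ContinuousLinearMap.comp_apply,
      ContinuousLinearMap.single_apply]
    rw [← map_sum, Finset.univ_sum_single]
  simp_rw [hL, mul_comm _ Complex.I]
  exact h _

/-- The linear shift `(x_1, …, x_N) ↦ (0, x_1, …, x_{N-1})`. -/
def shiftMap (d N : ℕ) : (Fin N → Ed d) →ₗ[ℝ] (Fin N → Ed d) where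
  toFun xs := prevPt 0 xs
  map_add' u v := by
    funext i
    by_cases h : (i : ℕ) = 0 <;> simp [prevPt, h]
  map_smul' c u := by
    funext i
    by_cases h : (i : ℕ) = 0 <;> simp [prevPt, h]

lemma isNilpotent_shiftMap (d N : ℕ) : IsNilpotent (shiftMap d N) := by
  have key : ∀ (k : ℕ) (v : Fin N → Ed d) (i : Fin N), (i : ℕ) < k →
      ((shiftMap d N) ^ k) v i = 0 := by
    intro k
    induction k with
    | zero => intro v i hi; omega
    | succ k ih =>
      intro v i hi
      rw [pow_succ', Module.End.mul_apply]
      change prevPt 0 _ i = 0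
      unfold prevPt
      split_ifs with h0
      · rfl
      · exact ih v _ (by simp only; omega)
  exact ⟨N, LinearMap.ext fun v => funext fun i => key N v i i.isLt⟩

lemma det_one_sub_shiftMap (d N : ℕ) : LinearMap.det (1 - shiftMap d N) = 1 := by
  have h := LinearMap.eval_charpoly (shiftMap d N) 1
  rw [(isNilpotent_shiftMap d N).charpoly_eq_X_pow_finrank] at h
  simpa using h.symm

/-- Passing from the points of a polygonal path to its increments preserves volume. -/
lemma measurePreserving_sub_prevPt {d N : ℕ} (x : Ed d) :
    MeasurePreserving (fun (xs : Fin N → Ed d) i => xs i - prevPt x xs i) := by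
  have h1 : MeasurePreserving (1 - shiftMap d N : (Fin N → Ed d) →ₗ[ℝ] (Fin N → Ed d)) := by
    refine ⟨(LinearMap.continuous_of_finiteDimensional _).measurable, ?_⟩
    rw [Measure.map_linearMap_addHaar_eq_smul_addHaar _
      (by rw [det_one_sub_shiftMap]; exact one_ne_zero), det_one_sub_shiftMap]
    simp
  have h2 := measurePreserving_add_right (volume : Measure (Fin N → Ed d))
    (fun i => if (i : ℕ) = 0 then -x else 0)
  have h3 : (fun (xs : Fin N → Ed d) i => xs i - prevPt x xs i) =
      (fun v => v + fun i : Fin N => if (i : ℕ) = 0 then -x else 0) ∘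
        (1 - shiftMap d N : (Fin N → Ed d) →ₗ[ℝ] (Fin N → Ed d)) := by
    funext xs i
    change xs i - prevPt x xs i = (xs i - prevPt 0 xs i) + (if (i : ℕ) = 0 then -x else 0)
    by_cases h : (i : ℕ) = 0 <;> simp [prevPt, h, sub_eq_add_neg]
  rw [h3]
  exact h2.comp h1

lemma continuous_pwLinE {d : ℕ} (x : Ed d) (N : ℕ) : Continuous (pwLinE x N) := by
  refine ContinuousMap.continuous_of_continuous_uncurry _ ?_
  change Continuous fun p : (Fin N → Ed d) × unitInterval =>
    x + ∑ i : Fin N, clamp01 ((N : ℝ) * (p.2 : ℝ) - ((i : ℕ) : ℝ)) • p.1 i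
  have := clamp01_continuous
  fun_prop

lemma continuous_pwLin1 {d : ℕ} (x : Ed d) (N : ℕ) : Continuous (pwLin1 x N) :=
  (continuous_pwLinE x N).subtype_mk _

lemma WxaN_eq_map {d : ℕ} (x : Ed d) (a : ℝ) (N : ℕ) :
    WxaN x a N =
      (gaussSteps d N a).map fun v => ((a ^ 2 * N : ℝ), pwLin1 x N v) := by
  have hmp := measurePreserving_sub_prevPt (N := N) x
  have hm : Measurable fun v : Fin N → Ed d => ((a ^ 2 * N : ℝ), pwLin1 x N v) :=
    (continuous_const.prodMk (continuous_pwLin1 x N)).measurable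
  have h : gaussSteps d N a = Measure.map (fun (xs : Fin N → Ed d) i => xs i - prevPt x xs i)
      (volume.withDensity fun xs : Fin N → Ed d =>
        ENNReal.ofReal (∏ i : Fin N, gaussDensity a (xs i - prevPt x xs i))) := by
    ext s hs
    rw [gaussSteps, Measure.map_apply hmp.measurable hs, withDensity_apply _ hs,
      withDensity_apply _ (hmp.measurable hs)]
    exact (hmp.setLIntegral_comp_preimage hs
      (continuous_prod_gaussDensity a).measurable.ennreal_ofReal).symm
  rw [h, Measure.map_map hm hmp.measurable]
  rfl

/-- The increments of a path over the intervals `[i/N, (i+1)/N]`. -/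
def pathIncr {d : ℕ} (N : ℕ) (ω : PathSp d) (i : Fin N) : Ed d :=
  evalAt ω ((((i : ℕ) + 1 : ℕ) : ℝ) / N) - evalAt ω (((i : ℕ) : ℝ) / N)

lemma continuous_pathIncr {d : ℕ} (N : ℕ) : Continuous (pathIncr (d := d) N) := by
  unfold pathIncr evalAt
  fun_prop

lemma evalAt_zero {d : ℕ} (ω : PathSp d) : evalAt ω 0 = ω 0 := by
  rw [evalAt, projIcc_left]; rfl

lemma sum_Ici_fin_sub {E : Type*} [AddCommGroup E] (F : ℕ → E) {n : ℕ} (i : Fin n) :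
    ∑ j ∈ Finset.Ici i, (F j - F ((j : ℕ) + 1)) = F i - F n := by
  have h : ∑ j ∈ Finset.Ici i, (F j - F ((j : ℕ) + 1)) =
      ∑ k ∈ Finset.Ico (i : ℕ) n, (F k - F (k + 1)) := by
    rw [← Fin.map_valEmbedding_Ici, Finset.sum_map]
    rfl
  rw [h, ← neg_inj, ← Finset.sum_neg_distrib]
  simp only [neg_sub]
  exact Finset.sum_Ico_sub F i.isLt.le

/-- Summation by parts for inner products. -/
lemma sum_range_inner_sub {E : Type*} [NormedAddCommGroup E] [InnerProductSpace ℝ E]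
    (F w : ℕ → E) (n : ℕ) :
    ∑ i ∈ Finset.range n, ⟪F i - F (i + 1), w (i + 1)⟫ =
      ∑ i ∈ Finset.range n, ⟪F i, w (i + 1) - w i⟫ + ⟪F 0, w 0⟫ - ⟪F n, w n⟫ := by
  induction n with
  | zero => simp
  | succ n ih =>
    rw [Finset.sum_range_succ, Finset.sum_range_succ, ih, inner_sub_left, inner_sub_right]
    ring

lemma IsWienerFamily.integral_cexp_pathIncr {d : ℕ} {x : Ed d} {Wt : ℝ → Measure (Omega1 x)}
    (hWt : IsWienerFamily x Wt) {t : ℝ} (ht : 0 < t) {N : ℕ} (hN : 0 < N) (η : Fin N → Ed d) :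
    ∫ ω, Complex.exp (Complex.I * ((∑ i, ⟪η i, pathIncr N ω.1 i⟫ : ℝ) : ℂ)) ∂(Wt t) =
      Complex.exp ((-(t / N / 2) * ∑ i, ‖η i‖ ^ 2 : ℝ) : ℂ) := by
  have hN' : (0 : ℝ) < N := by exact_mod_cast hN
  let F : ℕ → Ed d := fun k => if h : k < N then η ⟨k, h⟩ else 0
  have hF : ∀ i : Fin N, F i = η i := fun i => by simp [F]
  have hFN : F N = 0 := by simp [F]
  have key := (hWt t ht).2 N (fun k => (k : ℝ) / N) (by simp)
    (fun i _ => by push_cast; gcongr; linarith) (by simp [hN'.ne'])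
    (fun i => F i - F ((i : ℕ) + 1))
  have hin : ∀ ω : Omega1 x, ∑ i : Fin N, ⟪F i - F ((i : ℕ) + 1),
      evalAt ω.1 ((((i : ℕ) + 1 : ℕ) : ℝ) / N)⟫ =
      ∑ i, ⟪η i, pathIncr N ω.1 i⟫ + ⟪F 0, x⟫ := by
    intro ω
    rw [Fin.sum_univ_eq_sum_range (fun k => ⟪F k - F (k + 1),
      evalAt ω.1 (((k + 1 : ℕ) : ℝ) / N)⟫) N,
      sum_range_inner_sub F (fun k => evalAt ω.1 ((k : ℝ) / N)) N, hFN, inner_zero_left, sub_zero,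
      Nat.cast_zero, zero_div, evalAt_zero, ω.2, ← Fin.sum_univ_eq_sum_range (fun k => ⟪F k,
        evalAt ω.1 (((k + 1 : ℕ) : ℝ) / N) - evalAt ω.1 ((k : ℝ) / N)⟫) N]
    simp only [hF, pathIncr]
  have hsum : ∑ j : Fin N, (F j - F ((j : ℕ) + 1)) = F 0 := by
    rw [Fin.sum_univ_eq_sum_range (fun k => F k - F (k + 1)) N, Finset.sum_range_sub', hFN,
      sub_zero]
  have hstep : ∀ i : ℕ, (((i + 1 : ℕ) : ℝ) / N - (i : ℝ) / N) = 1 / N := by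
    intro i; push_cast; ring
  simp only [hin, sum_Ici_fin_sub, hFN, sub_zero, hsum, hstep] at key
  simp only [hF] at key
  rw [Complex.exp_add] at key
  simp only [Complex.ofReal_add, mul_add, Complex.exp_add] at key
  rw [integral_mul_const] at key
  rw [mul_right_cancel₀ (Complex.exp_ne_zero _) key, ← Finset.mul_sum]
  congr 2
  ring

/-- The rescaled increments of Brownian motion are independent Gaussian vectors. -/
lemma IsWienerFamily.map_smul_pathIncr {d : ℕ} {x : Ed d} {Wt : ℝ → Measure (Omega1 x)}
    (hWt : IsWienerFamily x Wt) {t : ℝ} (ht : 0 < t) {N : ℕ} (hN : 0 < N) {r : ℝ} (hr : 0 < r) :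
    (Wt t).map (fun ω => r • pathIncr N ω.1) = gaussSteps d N (r * √(t / N)) := by
  have hN' : (0 : ℝ) < N := by exact_mod_cast hN
  have hpos : 0 < r * √(t / N) := by positivity
  have hc : Continuous fun ω : Omega1 x => r • pathIncr N ω.1 :=
    ((continuous_pathIncr N).comp continuous_subtype_val).const_smul r
  have := (hWt t ht).1
  have := isProbabilityMeasure_gaussSteps d N hpos
  have := Measure.isProbabilityMeasure_map (μ := Wt t) hc.measurable.aemeasurable
  refine ext_of_integral_cexp_sum_inner fun η => ?_
  rw [integral_map hc.measurable.aemeasurable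
    (Continuous.aestronglyMeasurable (by fun_prop)), integral_cexp_gaussSteps hpos]
  have h := hWt.integral_cexp_pathIncr ht hN (fun i => r • η i)
  simp only [Pi.smul_apply, inner_smul_right, inner_smul_left, norm_smul, mul_pow,
    RCLike.conj_to_real] at h ⊢
  rw [h, ← Finset.mul_sum, Real.sq_sqrt (by positivity), Real.norm_eq_abs, sq_abs]
  congr 2
  ring

lemma sum_clamp01_smul_sub {E : Type*} [AddCommGroup E] [Module ℝ E] (w : ℕ → E) {n j : ℕ}
    (hj : j < n) {s : ℝ} (h1 : (j : ℝ) ≤ s) (h2 : s ≤ j + 1) :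
    ∑ i ∈ Finset.range n, clamp01 (s - i) • (w (i + 1) - w i) =
      w j - w 0 + (s - j) • (w (j + 1) - w j) := by
  rw [← Finset.sum_subset (Finset.range_mono (Nat.succ_le_of_lt hj)), Finset.sum_range_succ]
  · congr 1
    · rw [← Finset.sum_range_sub]
      refine Finset.sum_congr rfl fun i hi => ?_
      have : (i : ℝ) + 1 ≤ j := by exact_mod_cast Finset.mem_range.1 hi
      rw [clamp01_of_one_le (by linarith), one_smul]
    · rw [clamp01, max_eq_right (by linarith), min_eq_right (by linarith)]
  · intro i _ hi
    have : (j : ℝ) + 1 ≤ i := by exact_mod_cast not_lt.1 (mt Finset.mem_range.2 hi)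
    rw [clamp01_of_nonpos (by linarith), zero_smul]

/-- The polygonal interpolations of a path converge uniformly to it. -/
lemma tendsto_pwLinE_pathIncr {d : ℕ} (ω : PathSp d) :
    Tendsto (fun N => pwLinE (ω 0) N (pathIncr N ω)) atTop (𝓝 ω) := by
  rw [Metric.tendsto_atTop]
  intro ε hε
  obtain ⟨δ, hδ, hω⟩ := Metric.uniformContinuous_iff.1
    (CompactSpace.uniformContinuous_of_continuous ω.continuous) ε hε
  obtain ⟨n, hn⟩ := exists_nat_one_div_lt hδ
  refine ⟨n + 1, fun N hN => ?_⟩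
  have hN0 : 0 < N := by omega
  have hN' : (0 : ℝ) < N := by exact_mod_cast hN0
  have hNδ : 1 / (N : ℝ) < δ := lt_of_le_of_lt (by gcongr; exact_mod_cast hN) hn
  rw [ContinuousMap.dist_lt_iff hε]
  intro t
  obtain ⟨j, hjN, hj1, hj2⟩ : ∃ j : ℕ, j < N ∧ (j : ℝ) ≤ N * t ∧ (N : ℝ) * t ≤ j + 1 := by
    rcases eq_or_lt_of_le t.2.2 with h | h
    · refine ⟨N - 1, by omega, ?_, ?_⟩ <;> rw [h, Nat.cast_sub (by omega)] <;> push_cast <;>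
        linarith
    · have h0 : 0 ≤ (N : ℝ) * t := mul_nonneg hN'.le t.2.1
      refine ⟨⌊(N : ℝ) * t⌋₊, ?_, Nat.floor_le h0, (Nat.lt_floor_add_one _).le⟩
      rw [Nat.floor_lt h0]
      nlinarith
  let w : ℕ → Ed d := fun k => evalAt ω ((k : ℝ) / N)
  have hval : pwLinE (ω 0) N (pathIncr N ω) t =
      (1 - ((N : ℝ) * t - j)) • w j + ((N : ℝ) * t - j) • w (j + 1) := by
    change ω 0 + ∑ i : Fin N, clamp01 ((N : ℝ) * t - ((i : ℕ) : ℝ)) • (w (i + 1) - w i) = _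
    rw [Fin.sum_univ_eq_sum_range
      (fun i => clamp01 ((N : ℝ) * t - (i : ℝ)) • (w (i + 1) - w i)) N,
      sum_clamp01_smul_sub w hjN hj1 hj2]
    have : w 0 = ω 0 := by simp only [w, Nat.cast_zero, zero_div, evalAt_zero]
    rw [this]
    module
  have hball : ∀ k : ℕ, k ≤ N → |(k : ℝ) - N * t| ≤ 1 → w k ∈ Metric.ball (ω t) ε := by
    intro k hk hkt
    have hmem : (k : ℝ) / N ∈ Icc (0 : ℝ) 1 :=
      ⟨by positivity, div_le_one_of_le₀ (by exact_mod_cast hk) hN'.le⟩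
    rw [Metric.mem_ball]
    simp only [w, evalAt, projIcc_of_mem zero_le_one hmem]
    refine hω ?_
    rw [Subtype.dist_eq, Real.dist_eq]
    have : (k : ℝ) / N - t = (k - N * t) / N := by field_simp
    rw [this, abs_div, abs_of_pos hN']
    exact lt_of_le_of_lt (by gcongr) hNδ
  rw [hval, ← Metric.mem_ball]
  refine (convex_ball (ω t) ε) (hball j hjN.le ?_) (hball (j + 1) hjN ?_) ?_ ?_ (by ring)
  · rw [abs_le]; constructor <;> linarith
  · push_cast; rw [abs_le]; constructor <;> linarith
  · linarith
  · linarith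

/-- The path `x + r (ω - x)`. -/
def scalePath {d : ℕ} {x : Ed d} (r : ℝ) (ω : Omega1 x) : Omega1 x :=
  ⟨ContinuousMap.const _ x + r • (ω.1 - ContinuousMap.const _ x), by simp [ω.2]⟩

lemma continuous_scalePath {d : ℕ} {x : Ed d} :
    Continuous fun p : ℝ × Omega1 x => scalePath p.1 p.2 :=
  Continuous.subtype_mk (by fun_prop) _

lemma pwLin1_smul {d : ℕ} (x : Ed d) (N : ℕ) (r : ℝ) (v : Fin N → Ed d) :
    pwLin1 x N (r • v) = scalePath r (pwLin1 x N v) := by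
  refine Subtype.ext (ContinuousMap.ext fun t => ?_)
  change x + ∑ i : Fin N, clamp01 ((N : ℝ) * t - ((i : ℕ) : ℝ)) • (r • v i) =
    x + r • ((x + ∑ i : Fin N, clamp01 ((N : ℝ) * t - ((i : ℕ) : ℝ)) • v i) - x)
  rw [add_sub_cancel_left, Finset.smul_sum]
  simp_rw [smul_comm r]

lemma tendsto_pwLin1_pathIncr {d : ℕ} {x : Ed d} (ω : Omega1 x) :
    Tendsto (fun N => pwLin1 x N (pathIncr N ω.1)) atTop (𝓝 ω) := by
  rw [tendsto_subtype_rng]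
  have h := tendsto_pwLinE_pathIncr ω.1
  rw [ω.2] at h
  exact h

lemma continuous_pwLin1_pathIncr {d : ℕ} (x : Ed d) (N : ℕ) :
    Continuous fun ω : Omega1 x => pwLin1 x N (pathIncr N ω.1) :=
  (continuous_pwLin1 x N).comp ((continuous_pathIncr N).comp continuous_subtype_val)

lemma IsWienerFamily.integral_scalePath_pathIncr {d : ℕ} {x : Ed d} {Wt : ℝ → Measure (Omega1 x)}
    (hWt : IsWienerFamily x Wt) {t : ℝ} (ht : 0 < t) {N : ℕ} (hN : 0 < N) {r : ℝ} (hr : 0 < r)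
    {g : Omega1 x → ℝ} (hg : Continuous g) :
    ∫ ω, g (scalePath r (pwLin1 x N (pathIncr N ω.1))) ∂(Wt t) =
      ∫ v, g (pwLin1 x N v) ∂(gaussSteps d N (r * √(t / N))) := by
  have hc : Continuous fun ω : Omega1 x => r • pathIncr N ω.1 :=
    ((continuous_pathIncr N).comp continuous_subtype_val).const_smul r
  rw [← hWt.map_smul_pathIncr ht hN hr, integral_map (f := fun v => g (pwLin1 x N v))
    hc.measurable.aemeasurable (hg.comp (continuous_pwLin1 x N)).aestronglyMeasurable]
  simp only [pwLin1_smul]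

/-- Brownian scaling. -/
lemma IsWienerFamily.integral_eq_integral_scalePath {d : ℕ} {x : Ed d}
    {Wt : ℝ → Measure (Omega1 x)} (hWt : IsWienerFamily x Wt) {t : ℝ} (ht : 0 < t)
    {g : Omega1 x → ℝ} (hg : Continuous g) {C : ℝ} (hC : ∀ ω, ‖g ω‖ ≤ C) :
    ∫ ω, g ω ∂(Wt t) = ∫ ω, g (scalePath (√t) ω) ∂(Wt 1) := by
  have lim : ∀ s r : ℝ, 0 < s →
      Tendsto (fun N => ∫ ω, g (scalePath r (pwLin1 x N (pathIncr N ω.1))) ∂(Wt s)) atTop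
        (𝓝 (∫ ω, g (scalePath r ω) ∂(Wt s))) := by
    intro s r hs
    have := (hWt s hs).1
    have hr : Continuous fun ω : Omega1 x => g (scalePath r ω) :=
      hg.comp (continuous_scalePath.comp (Continuous.prodMk_right r))
    refine tendsto_integral_filter_of_dominated_convergence (fun _ => C)
      (.of_forall fun N => (hr.comp (continuous_pwLin1_pathIncr x N)).aestronglyMeasurable)
      (.of_forall fun N => ae_of_all _ fun ω => hC _) (integrable_const C)
      (ae_of_all _ fun ω => (hr.tendsto ω).comp (tendsto_pwLin1_pathIncr ω))
  have hone : ∀ ω : Omega1 x, scalePath 1 ω = ω := fun ω => by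
    apply Subtype.ext; simp [scalePath]
  have h1 := lim t 1 ht
  simp only [hone] at h1
  refine tendsto_nhds_unique h1 ((lim 1 (√t) one_pos).congr' ?_)
  filter_upwards [eventually_gt_atTop 0] with N hN
  rw [hWt.integral_scalePath_pathIncr one_pos hN (Real.sqrt_pos.2 ht) hg]
  have h := hWt.integral_scalePath_pathIncr ht hN one_pos hg
  simp only [hone] at h
  rw [h, one_mul, ← Real.sqrt_mul ht.le, mul_one_div]

lemma isProbabilityMeasure_WxaN {d : ℕ} (x : Ed d) {a : ℝ} (ha : 0 < a) (N : ℕ) :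
    IsProbabilityMeasure (WxaN x a N) := by
  have := isProbabilityMeasure_gaussSteps d N ha
  rw [WxaN_eq_map]
  exact Measure.isProbabilityMeasure_map
    (continuous_const.prodMk (continuous_pwLin1 x N)).measurable.aemeasurable

lemma norm_integral_WxaN_le {d : ℕ} (x : Ed d) {a : ℝ} (ha : 0 < a) (N : ℕ)
    (f : BoundedContinuousFunction (ℝ × Omega1 x) ℝ) :
    ‖∫ p, f p ∂(WxaN x a N)‖ ≤ ‖f‖ := by
  have := isProbabilityMeasure_WxaN x ha N
  simpa using norm_integral_le_of_norm_le_const (μ := WxaN x a N) (ae_of_all _ f.norm_coe_le_norm)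

/-- Integration against `W_{x,a,N}` expressed through the standard Wiener measure. -/
lemma IsWienerFamily.integral_WxaN {d : ℕ} {x : Ed d} {Wt : ℝ → Measure (Omega1 x)}
    (hWt : IsWienerFamily x Wt) {a : ℝ} (ha : 0 < a) {N : ℕ} (hN : 0 < N)
    (f : BoundedContinuousFunction (ℝ × Omega1 x) ℝ) :
    ∫ p, f p ∂(WxaN x a N) = ∫ ω, f (a ^ 2 * N,
      scalePath (√(a ^ 2 * N)) (pwLin1 x N (pathIncr N ω.1))) ∂(Wt 1) := by
  have hN' : (0 : ℝ) < N := by exact_mod_cast hN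
  have hc : Continuous fun ω : Omega1 x => f (a ^ 2 * N, ω) :=
    f.continuous.comp (Continuous.prodMk_right _)
  rw [hWt.integral_scalePath_pathIncr one_pos hN (by positivity) hc, WxaN_eq_map,
    integral_map (continuous_const.prodMk (continuous_pwLin1 x N)).measurable.aemeasurable
      f.continuous.measurable.aestronglyMeasurable, ← Real.sqrt_mul (by positivity)]
  have h : a ^ 2 * N * (1 / N) = a ^ 2 := by field_simp
  rw [h, Real.sqrt_sq ha.le]

lemma tendsto_sq_nhdsGT_zero : Tendsto (fun a : ℝ => a ^ 2) (𝓝[>] 0) (𝓝[>] 0) := by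
  refine tendsto_nhdsWithin_iff.2 ⟨?_, ?_⟩
  · have : Tendsto (fun a : ℝ => a ^ 2) (𝓝 0) (𝓝 (0 ^ 2)) := (continuous_pow 2).tendsto 0
    rw [zero_pow two_ne_zero] at this
    exact this.mono_left nhdsWithin_le_nhds
  · filter_upwards [self_mem_nhdsWithin] with a ha
    exact pow_pos (mem_Ioi.1 ha) 2

lemma tendsto_div_sq_atTop {t : ℝ} (ht : 0 < t) :
    Tendsto (fun a : ℝ => t / a ^ 2) (𝓝[>] 0) atTop := by
  exact (tendsto_inv_nhdsGT_zero.comp tendsto_sq_nhdsGT_zero).const_mul_atTop ht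

lemma tendsto_sq_mul_floor {t : ℝ} (ht : 0 < t) :
    Tendsto (fun a : ℝ => a ^ 2 * (⌊t / a ^ 2⌋₊ : ℝ)) (𝓝[>] 0) (𝓝 t) := by
  have h := ((tendsto_nat_floor_div_atTop (R := ℝ)).comp (tendsto_div_sq_atTop ht)).const_mul t
  rw [mul_one] at h
  refine h.congr' ?_
  filter_upwards [self_mem_nhdsWithin] with a ha
  have : a ≠ 0 := (mem_Ioi.1 ha).ne'
  simp only [Function.comp_apply]
  field_simp

lemma IsWienerFamily.tendsto_integral_WxaN {d : ℕ} {x : Ed d} {Wt : ℝ → Measure (Omega1 x)}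
    (hWt : IsWienerFamily x Wt) (f : BoundedContinuousFunction (ℝ × Omega1 x) ℝ) {t : ℝ}
    (ht : 0 < t) :
    Tendsto (fun a : ℝ => ∫ p, f p ∂(WxaN x a ⌊t / a ^ 2⌋₊)) (𝓝[>] 0)
      (𝓝 (∫ ω, f (t, ω) ∂(Wt t))) := by
  have := (hWt 1 one_pos).1
  have hfloor : Tendsto (fun a : ℝ => ⌊t / a ^ 2⌋₊) (𝓝[>] 0) atTop :=
    tendsto_nat_floor_atTop.comp (tendsto_div_sq_atTop ht)
  rw [hWt.integral_eq_integral_scalePath ht (g := fun ω => f (t, ω))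
    (f.continuous.comp (Continuous.prodMk_right _)) (fun ω => f.norm_coe_le_norm _)]
  have hlim : Tendsto (fun a : ℝ => ∫ ω, f (a ^ 2 * ⌊t / a ^ 2⌋₊,
      scalePath (√(a ^ 2 * ⌊t / a ^ 2⌋₊))
        (pwLin1 x ⌊t / a ^ 2⌋₊ (pathIncr ⌊t / a ^ 2⌋₊ ω.1))) ∂(Wt 1)) (𝓝[>] 0)
      (𝓝 (∫ ω, f (t, scalePath (√t) ω) ∂(Wt 1))) := by
    refine tendsto_integral_filter_of_dominated_convergence (fun _ => ‖f‖)
      (.of_forall fun a => ?_) (.of_forall fun a => ae_of_all _ fun ω => f.norm_coe_le_norm _)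
      (integrable_const _) (ae_of_all _ fun ω => ?_)
    · exact (f.continuous.comp (continuous_const.prodMk (continuous_scalePath.comp
        (continuous_const.prodMk (continuous_pwLin1_pathIncr x _))))).aestronglyMeasurable
    · have h1 := tendsto_sq_mul_floor ht
      have h2 : Tendsto (fun a : ℝ => √(a ^ 2 * ⌊t / a ^ 2⌋₊)) (𝓝[>] 0) (𝓝 (√t)) :=
        (Real.continuous_sqrt.tendsto t).comp h1
      have h3 := (tendsto_pwLin1_pathIncr ω).comp hfloor
      have h4 := (continuous_scalePath.tendsto (√t, ω)).comp (h2.prodMk_nhds h3)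
      have h5 := (f.continuous.tendsto (t, scalePath (√t) ω)).comp (h1.prodMk_nhds h4)
      exact h5
  refine hlim.congr' ?_
  filter_upwards [self_mem_nhdsWithin, hfloor.eventually_gt_atTop 0] with a ha hN
  exact (hWt.integral_WxaN (mem_Ioi.1 ha) hN f).symm

/-- The integral of a step function with steps of length `b` as a series. -/
lemma hasSum_integral_comp_floor {b : ℝ} (hb : 0 < b) (h : ℕ → ℝ)
    (hint : IntegrableOn (fun t : ℝ => h ⌊t / b⌋₊) (Ioi 0)) :
    HasSum (fun N => b * h N) (∫ t in Ioi (0 : ℝ), h ⌊t / b⌋₊) := by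
  have hU : ⋃ N : ℕ, Ico (b * N) (b * (N + 1)) = Ici 0 := by
    ext t
    simp only [mem_iUnion, mem_Ico, mem_Ici]
    constructor
    · rintro ⟨N, h1, -⟩
      exact le_trans (by positivity) h1
    · intro ht
      refine ⟨⌊t / b⌋₊, ?_, ?_⟩
      · rw [mul_comm, ← le_div_iff₀ hb]; exact Nat.floor_le (by positivity)
      · rw [mul_comm, ← div_lt_iff₀ hb]; exact Nat.lt_floor_add_one _
  have hfl : ∀ N : ℕ, ∀ t ∈ Ico (b * N) (b * (N + 1)), ⌊t / b⌋₊ = N := by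
    rintro N t ⟨h1, h2⟩
    have h0 : 0 ≤ t := le_trans (by positivity) h1
    rw [Nat.floor_eq_iff (by positivity), le_div_iff₀ hb, div_lt_iff₀ hb]
    constructor <;> linarith
  have hd : Pairwise (Function.onFun Disjoint fun N : ℕ => Ico (b * N) (b * (N + 1))) := by
    intro i j hij
    refine Set.disjoint_left.2 fun t hi hj => hij ?_
    rw [← hfl i t hi, hfl j t hj]
  have key := hasSum_integral_iUnion (μ := volume) (f := fun t : ℝ => h ⌊t / b⌋₊)
    (fun N : ℕ => measurableSet_Ico) hd
    (by rw [hU, integrableOn_Ici_iff_integrableOn_Ioi]; exact hint)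
  rw [hU, integral_Ici_eq_integral_Ioi] at key
  have hterm : ∀ N : ℕ, ∫ t in Ico (b * N) (b * (N + 1)), h ⌊t / b⌋₊ = b * h N := by
    intro N
    rw [setIntegral_congr_fun measurableSet_Ico
      (fun t ht => show h ⌊t / b⌋₊ = h N by rw [hfl N t ht]), setIntegral_const,
      Real.volume_real_Ico, smul_eq_mul, max_eq_left (by nlinarith)]
    ring
  simpa only [hterm] using key

lemma hasSum_integral_Wxa {d : ℕ} (x : Ed d) {m a : ℝ} (hm : 0 < m) (ha : 0 < a)
    (f : BoundedContinuousFunction (ℝ × Omega1 x) ℝ) :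
    HasSum (fun N : ℕ => (1 - Real.exp (-m ^ 2 * a ^ 2 / 2)) *
      (Real.exp (-m ^ 2 * a ^ 2 * N / 2) * ∫ p, f p ∂(WxaN x a N))) (∫ p, f p ∂(Wxa x m a)) := by
  have hsum : Summable fun N : ℕ => Real.exp (-m ^ 2 * a ^ 2 * N / 2) := by
    have h := Real.summable_exp_nat_mul_iff.2
      (show -m ^ 2 * a ^ 2 / 2 < 0 by nlinarith [mul_pos (pow_pos hm 2) (pow_pos ha 2)])
    refine h.congr fun N => ?_
    congr 1
    ring
  have hfin : IsFiniteMeasure (Measure.sum fun N : ℕ =>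
      ENNReal.ofReal (Real.exp (-m ^ 2 * a ^ 2 * N / 2)) • WxaN x a N) := by
    refine ⟨?_⟩
    rw [Measure.sum_apply _ MeasurableSet.univ]
    have h1 : ∀ N : ℕ, (ENNReal.ofReal (Real.exp (-m ^ 2 * a ^ 2 * N / 2)) • WxaN x a N) univ =
        ENNReal.ofReal (Real.exp (-m ^ 2 * a ^ 2 * N / 2)) := by
      intro N
      have := isProbabilityMeasure_WxaN x ha N
      simp
    simp_rw [h1]
    rw [← ENNReal.ofReal_tsum_of_nonneg (fun N => (Real.exp_pos _).le) hsum]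
    exact ENNReal.ofReal_lt_top
  have hint := hasSum_integral_measure (f.integrable (μ := Measure.sum fun N : ℕ =>
      ENNReal.ofReal (Real.exp (-m ^ 2 * a ^ 2 * N / 2)) • WxaN x a N))
  have h0 : 0 ≤ 1 - Real.exp (-m ^ 2 * a ^ 2 / 2) := by
    rw [sub_nonneg, Real.exp_le_one_iff]
    nlinarith [mul_pos (pow_pos hm 2) (pow_pos ha 2)]
  rw [Wxa, integral_smul_measure, ENNReal.toReal_ofReal h0, smul_eq_mul]
  simp only [integral_smul_measure, ENNReal.toReal_ofReal (Real.exp_pos _).le, smul_eq_mul] at hint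
  exact hint.mul_left _

lemma tendsto_one_sub_exp_div_sq (c : ℝ) :
    Tendsto (fun a : ℝ => (1 - Real.exp (-c * a ^ 2 / 2)) / a ^ 2) (𝓝[>] 0) (𝓝 (c / 2)) := by
  have hd : HasDerivAt (fun s : ℝ => 1 - Real.exp (-c * s / 2)) (c / 2) 0 := by
    have h1 : HasDerivAt (fun s : ℝ => -c * s / 2) (-c / 2) 0 := by
      simpa using ((hasDerivAt_id (0 : ℝ)).const_mul (-c)).div_const 2
    have h2 := h1.exp.const_sub 1
    rw [mul_zero, zero_div, Real.exp_zero] at h2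
    exact h2.congr_deriv (by ring)
  have h2 := hd.tendsto_slope_zero_right
  refine (h2.comp tendsto_sq_nhdsGT_zero).congr fun a => ?_
  simp [div_eq_inv_mul]

/-- **Theorem 3.1**: `W_{x,a} → (m²/2) W_x` weakly as `a → 0⁺`, where
`W_x(B) = ∫_0^∞ e^{-m²t/2} W_x^t(B_t) dt`. -/
theorem Wxa_tendsto_weakly (d : ℕ) (hd : 1 ≤ d) (m : ℝ) (hm : 0 < m) (x : Ed d)
    (Wt : ℝ → Measure (Omega1 x)) (hWt : IsWienerFamily x Wt) :
    ∀ f : BoundedContinuousFunction (ℝ × Omega1 x) ℝ,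
      Tendsto (fun a : ℝ => ∫ p, f p ∂(Wxa x m a)) (nhdsWithin 0 (Set.Ioi 0))
        (nhds ((m ^ 2 / 2) *
          ∫ t in Set.Ioi (0 : ℝ), Real.exp (-m ^ 2 * t / 2) * ∫ ω, f (t, ω) ∂(Wt t))) := by
  intro f
  have hb : 0 < m ^ 2 / 2 := by positivity
  let F : ℝ → ℝ → ℝ := fun a t => (1 - Real.exp (-m ^ 2 * a ^ 2 / 2)) / a ^ 2 *
    (Real.exp (-m ^ 2 * a ^ 2 * ⌊t / a ^ 2⌋₊ / 2) * ∫ p, f p ∂(WxaN x a ⌊t / a ^ 2⌋₊))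
  let bound : ℝ → ℝ := fun t =>
    m ^ 2 / 2 * (Real.exp (m ^ 2 / 2) * ‖f‖) * Real.exp (-(m ^ 2 / 2) * t)
  have hF_meas : ∀ a, Measurable (F a) := by
    intro a
    have h : Measurable fun N : ℕ => (1 - Real.exp (-m ^ 2 * a ^ 2 / 2)) / a ^ 2 *
      (Real.exp (-m ^ 2 * a ^ 2 * N / 2) * ∫ p, f p ∂(WxaN x a N)) := measurable_from_nat
    exact h.comp (Nat.measurable_floor.comp (measurable_id.div_const _))
  have hbound_int : Integrable bound (volume.restrict (Ioi 0)) :=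
    (exp_neg_integrableOn_Ioi 0 hb).const_mul _
  have hF_bound : ∀ a ∈ Ioo (0 : ℝ) 1, ∀ t, ‖F a t‖ ≤ bound t := by
    rintro a ⟨ha, ha1⟩ t
    have ha2 : 0 < a ^ 2 := pow_pos ha 2
    have ha2' : a ^ 2 ≤ 1 := pow_le_one₀ ha.le ha1.le
    have h1 : ‖(1 - Real.exp (-m ^ 2 * a ^ 2 / 2)) / a ^ 2‖ ≤ m ^ 2 / 2 := by
      have hle : Real.exp (-m ^ 2 * a ^ 2 / 2) ≤ 1 :=
        Real.exp_le_one_iff.2 (by nlinarith [mul_pos hb ha2])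
      rw [Real.norm_of_nonneg (div_nonneg (sub_nonneg.2 hle) ha2.le), div_le_iff₀ ha2]
      linarith [Real.add_one_le_exp (-m ^ 2 * a ^ 2 / 2)]
    have h2 : Real.exp (-m ^ 2 * a ^ 2 * ⌊t / a ^ 2⌋₊ / 2) ≤
        Real.exp (m ^ 2 / 2) * Real.exp (-(m ^ 2 / 2) * t) := by
      rw [← Real.exp_add, Real.exp_le_exp]
      have h3 : t ≤ a ^ 2 * ⌊t / a ^ 2⌋₊ + 1 := by
        have h := (div_lt_iff₀ ha2).1 (Nat.lt_floor_add_one (t / a ^ 2))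
        nlinarith
      nlinarith [mul_le_mul_of_nonneg_left h3 hb.le]
    calc ‖F a t‖ ≤ m ^ 2 / 2 *
          (Real.exp (m ^ 2 / 2) * Real.exp (-(m ^ 2 / 2) * t) * ‖f‖) := by
          simp only [F]
          rw [norm_mul, norm_mul, Real.norm_of_nonneg (Real.exp_pos _).le]
          gcongr
          exact norm_integral_WxaN_le x ha _ f
      _ = bound t := by simp only [bound]; ring
  have hlim : Tendsto (fun a => ∫ t in Ioi (0 : ℝ), F a t) (𝓝[>] 0)
      (𝓝 (∫ t in Ioi (0 : ℝ),
        m ^ 2 / 2 * (Real.exp (-m ^ 2 * t / 2) * ∫ ω, f (t, ω) ∂(Wt t)))) := by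
    refine tendsto_integral_filter_of_dominated_convergence bound
      (.of_forall fun a => (hF_meas a).aestronglyMeasurable) ?_ hbound_int ?_
    · filter_upwards [Ioo_mem_nhdsGT one_pos] with a ha
      exact ae_of_all _ (hF_bound a ha)
    · filter_upwards [ae_restrict_mem measurableSet_Ioi] with t ht
      refine (tendsto_one_sub_exp_div_sq (m ^ 2)).mul
        (Tendsto.mul ?_ (hWt.tendsto_integral_WxaN f ht))
      have h := (tendsto_sq_mul_floor (mem_Ioi.1 ht)).const_mul (-m ^ 2)
      simp only [← mul_assoc] at h
      exact (Real.continuous_exp.tendsto _).comp (h.div_const 2)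
  rw [integral_const_mul] at hlim
  refine hlim.congr' ?_
  filter_upwards [Ioo_mem_nhdsGT one_pos] with a ha
  have h1 := hasSum_integral_comp_floor (pow_pos ha.1 2)
    (fun N : ℕ => (1 - Real.exp (-m ^ 2 * a ^ 2 / 2)) / a ^ 2 *
      (Real.exp (-m ^ 2 * a ^ 2 * N / 2) * ∫ p, f p ∂(WxaN x a N)))
    (hbound_int.mono' (hF_meas a).aestronglyMeasurable (ae_of_all _ (hF_bound a ha)))
  refine h1.unique ?_
  convert hasSum_integral_Wxa x hm ha.1 f using 1
  funext N
  have : a ^ 2 ≠ 0 := (pow_pos ha.1 2).ne'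
  rw [← mul_assoc, mul_div_cancel₀ _ this]

end
end
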